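/- arXiv:math/9803067 — 2 statements merged into one kernel-verified Lean document; each statement's English description precedes it below -/
import Mathlib

section
/- Catalan's constant satisfies G = Im{ 3·Li₂((1+i)/2) − Li₂((1+i)/4) + (3/2)·Li₂(−i/2) }. -/
open Complex

/-- The polylogarithm `Li n z = ∑_{k ≥ 1} z^k / k^n`. -/
noncomputable def Li (n : ℕ) (z : ℂ) : ℂ := ∑' k : ℕ, z ^ (k + 1) / ((k + 1 : ℕ) : ℂ) ^ n

/-- Catalan's constant. -/
noncomputable def catalan' : ℝ := ∑' k : ℕ, (-1 : ℝ) ^ k / ((2 * k + 1 : ℕ) : ℝ) ^ 2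


/-!
Evaluating a few classical functional equations of the dilogarithm at Gaussian rationals and taking
imaginary parts gives a linear system for the values of `Im Li₂`, from which the formula follows.
Write `γ = arctan (1/3)` and `δ = arctan (1/2)`, so that `γ + δ = π/4`. The inputs are

* Abel's five-term relation (`Li_two_abel`) at `((1 + i)/4, 1/2)`, which involves `(1 + i)/2`,
  `(3 + i)/5`, `(1 + i)/4`, `1/2` and `(1 + 2i)/5`, and at the diagonal point `x = y = (2 + i)/5`,
  which involves `(1 + i)/2`, `(2 + i)/5` and `i/2`;
* Euler's reflection relation (`Li_two_reflection_im`) linking `(3 + i)/5` and `(2 - i)/5`;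
* Landen's relation (`Li_two_landen`) linking `i/2` and `(1 - 2i)/5`, and linking `(1 + i)/2` and
  `-i`; the latter brings in Catalan's constant, as `Im Li₂(i) = G`.

Eliminating the auxiliary points, all terms in `log 5` cancel and the remaining multiple of `log 2`
is governed by `γ + δ = π/4`.

Each functional equation holds because the difference of its sides has derivative zero on a
connected set; `dLi`, the derivative of `Li 2` in the open disc, is read off the power series.
-/

/-! ### The dilogarithm on the unit disc -/

theorem Li_two_norm_le {z : ℂ} (hz : ‖z‖ ≤ 1) (k : ℕ) :
    ‖z ^ (k + 1) / ((k + 1 : ℕ) : ℂ) ^ 2‖ ≤ 1 / ((k + 1 : ℕ) : ℝ) ^ 2 := by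
  rw [norm_div, norm_pow, norm_pow, Complex.norm_natCast]
  gcongr
  exact pow_le_one₀ (norm_nonneg _) hz

theorem summable_inv_succ_sq : Summable fun k : ℕ => 1 / ((k + 1 : ℕ) : ℝ) ^ 2 :=
  (summable_nat_add_iff 1).2 (Real.summable_one_div_nat_pow.2 one_lt_two)

theorem Li_two_summable {z : ℂ} (hz : ‖z‖ ≤ 1) :
    Summable fun k : ℕ => z ^ (k + 1) / ((k + 1 : ℕ) : ℂ) ^ 2 :=
  Summable.of_norm_bounded summable_inv_succ_sq (Li_two_norm_le hz)

theorem Li_two_continuousOn : ContinuousOn (Li 2) (Metric.closedBall 0 1) := by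
  unfold Li
  refine continuousOn_tsum (fun k => by fun_prop) summable_inv_succ_sq ?_
  intro k z hz
  exact Li_two_norm_le (by simpa using hz) k

theorem Li_two_zero : Li 2 0 = 0 := by simp [Li]

theorem Li_two_conj (z : ℂ) : Li 2 (starRingEnd ℂ z) = starRingEnd ℂ (Li 2 z) := by
  unfold Li
  rw [Complex.conj_tsum]
  simp

/-- The derivative of `Li 2` in the unit disc, i.e. `-log (1 - z) / z` with its removable
singularity at the origin filled in. -/
noncomputable def dLi (z : ℂ) : ℂ := if z = 0 then 1 else -log (1 - z) / z

theorem dLi_zero : dLi 0 = 1 := by simp [dLi]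

theorem dLi_of_ne {z : ℂ} (hz : z ≠ 0) : dLi z = -log (1 - z) / z := by simp [dLi, hz]

theorem tsum_eq_dLi {z : ℂ} (hz : ‖z‖ < 1) :
    ∑' k : ℕ, z ^ k / ((k + 1 : ℕ) : ℂ) = dLi z := by
  by_cases h0 : z = 0
  · subst h0
    rw [dLi_zero, tsum_eq_single 0]
    · simp
    · intro k hk
      simp [hk]
  · have h := (hasSum_nat_add_iff' 1).2 (Complex.hasSum_taylorSeries_neg_log hz)
    have h2 := h.div_const z
    rw [dLi_of_ne h0, ← (show (-log (1 - z) - ∑ i ∈ Finset.range 1, z ^ i / (i : ℂ)) / z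
      = -log (1 - z) / z by simp), ← h2.tsum_eq]
    refine tsum_congr fun k => ?_
    have : ((k + 1 : ℕ) : ℂ) ≠ 0 := Nat.cast_ne_zero.2 k.succ_ne_zero
    field_simp
    ring

theorem Li_two_hasDerivAt {z : ℂ} (hz : ‖z‖ < 1) : HasDerivAt (Li 2) (dLi z) z := by
  obtain ⟨r, hzr, hr⟩ := exists_between hz
  have hr0 : 0 ≤ r := (norm_nonneg z).trans hzr.le
  rw [← tsum_eq_dLi hz]
  change HasDerivAt (fun z : ℂ => ∑' k : ℕ, z ^ (k + 1) / ((k + 1 : ℕ) : ℂ) ^ 2) _ z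
  refine hasDerivAt_tsum_of_isPreconnected
    (g := fun (k : ℕ) (z : ℂ) => z ^ (k + 1) / ((k + 1 : ℕ) : ℂ) ^ 2)
    (g' := fun (k : ℕ) (z : ℂ) => z ^ k / ((k + 1 : ℕ) : ℂ)) (t := Metric.ball (0 : ℂ) r) (y₀ := 0)
    (summable_geometric_of_lt_one hr0 hr) Metric.isOpen_ball
    (convex_ball _ _).isPreconnected ?_ ?_ ?_ ?_ ?_
  · intro k y _
    have : ((k + 1 : ℕ) : ℂ) ≠ 0 := Nat.cast_ne_zero.2 k.succ_ne_zero
    have h := (hasDerivAt_pow (k + 1) y).div_const (((k + 1 : ℕ) : ℂ) ^ 2)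
    refine h.congr_deriv ?_
    rw [Nat.add_sub_cancel]
    field_simp
  · intro k y hy
    rw [norm_div, norm_pow, Complex.norm_natCast]
    have hy' : ‖y‖ ≤ r := by simpa using (Metric.mem_ball.1 hy).le
    refine (div_le_self (by positivity) ?_).trans (pow_le_pow_left₀ (norm_nonneg _) hy' k)
    exact_mod_cast Nat.succ_pos k
  · simpa using (norm_nonneg z).trans_lt hzr
  · exact Li_two_summable (by simp)
  · simpa using hzr

/-! ### Functional equations -/

theorem re_one_sub_pos {z : ℂ} (hz : ‖z‖ < 1) : 0 < (1 - z).re := by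
  have := (Complex.re_le_norm z).trans_lt hz
  simp only [sub_re, one_re]
  linarith

theorem log_mul_of_re_pos {a b : ℂ} (ha : 0 < a.re) (hb : 0 < b.re) :
    log (a * b) = log a + log b := by
  have h1 := abs_lt.1 (Complex.abs_arg_lt_pi_div_two_iff.2 (Or.inl ha))
  have h2 := abs_lt.1 (Complex.abs_arg_lt_pi_div_two_iff.2 (Or.inl hb))
  refine Complex.log_mul ?_ ?_ ⟨by linarith, by linarith⟩
  · rintro rfl; simp at ha
  · rintro rfl; simp at hb

theorem log_one_sub_hasDerivAt {z : ℂ} (hz : 0 < (1 - z).re) :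
    HasDerivAt (fun z => log (1 - z)) (-1 / (1 - z)) z :=
  ((hasDerivAt_id z).const_sub 1).clog (Or.inl hz)

/-- In the range `‖x‖ + ‖y‖ < 1` all five arguments of Abel's relation lie in the open unit disc. -/
theorem abel_aux {x y : ℂ} (h : ‖x‖ + ‖y‖ < 1) :
    ‖x‖ < 1 ∧ ‖y‖ < 1 ∧ ‖x / (1 - y)‖ < 1 ∧ ‖y / (1 - x)‖ < 1 ∧
      ‖x * y / ((1 - x) * (1 - y))‖ < 1 := by
  have hx0 := norm_nonneg x
  have hy0 := norm_nonneg y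
  have hx : 1 - ‖x‖ ≤ ‖1 - x‖ := by simpa using norm_sub_norm_le 1 x
  have hy : 1 - ‖y‖ ≤ ‖1 - y‖ := by simpa using norm_sub_norm_le 1 y
  refine ⟨by linarith, by linarith, ?_, ?_, ?_⟩
  · rw [norm_div, div_lt_one (by linarith)]; linarith
  · rw [norm_div, div_lt_one (by linarith)]; linarith
  · rw [norm_div, norm_mul, norm_mul, div_lt_one (mul_pos (by linarith) (by linarith))]
    nlinarith [mul_le_mul hx hy (by linarith) (norm_nonneg _)]

/-- Abel's form of the five-term relation of the dilogarithm, in the range `‖x‖ + ‖y‖ < 1` where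
every argument lies in the open unit disc and every logarithm is principal. -/
theorem Li_two_abel {x y : ℂ} (h : ‖x‖ + ‖y‖ < 1) :
    Li 2 (x / (1 - y)) + Li 2 (y / (1 - x)) - Li 2 x - Li 2 y
      - Li 2 (x * y / ((1 - x) * (1 - y))) = log (1 - x) * log (1 - y) := by
  set f : ℂ → ℂ := fun x => Li 2 (x / (1 - y)) + Li 2 (y / (1 - x)) - Li 2 x - Li 2 y
      - Li 2 (x * y / ((1 - x) * (1 - y))) - log (1 - x) * log (1 - y) with hf
  have hder : ∀ z ∈ Metric.ball (0 : ℂ) (1 - ‖y‖), HasDerivAt f 0 z := by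
    intro z hz
    have hz' : ‖z‖ + ‖y‖ < 1 := by
      have := mem_ball_zero_iff.1 hz
      linarith
    obtain ⟨h1, h2, h3, h4, h5⟩ := abel_aux hz'
    have r1 := re_one_sub_pos h1
    have r2 := re_one_sub_pos h2
    have r3 := re_one_sub_pos h3
    have r4 := re_one_sub_pos h4
    have r5 := re_one_sub_pos h5
    have ne1 : 1 - z ≠ 0 := fun h => by simp [h] at r1
    have ne2 : 1 - y ≠ 0 := fun h => by simp [h] at r2
    have i3 : HasDerivAt (fun z => z / (1 - y)) (1 / (1 - y)) z :=
      (hasDerivAt_id z).div_const (1 - y)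
    have i4 : HasDerivAt (fun z => y / (1 - z)) (y / (1 - z) ^ 2) z := by
      refine ((hasDerivAt_const z y).fun_div ((hasDerivAt_id z).const_sub 1) ne1).congr_deriv ?_
      simp
    have i5 : HasDerivAt (fun z => z * y / ((1 - z) * (1 - y)))
        (y / ((1 - z) ^ 2 * (1 - y))) z := by
      refine (((hasDerivAt_id z).mul_const y).fun_div
        (((hasDerivAt_id z).const_sub 1).mul_const (1 - y))
          (mul_ne_zero ne1 ne2)).congr_deriv ?_
      simp only [id]
      field_simp
      ring
    have d3 := HasDerivAt.comp (h₂ := Li 2) z (Li_two_hasDerivAt h3) i3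
    have d4 := HasDerivAt.comp (h₂ := Li 2) z (Li_two_hasDerivAt h4) i4
    have d5 := HasDerivAt.comp (h₂ := Li 2) z (Li_two_hasDerivAt h5) i5
    have d6 := (log_one_sub_hasDerivAt r1).mul_const (log (1 - y))
    have key := ((((d3.add d4).sub (Li_two_hasDerivAt h1)).sub_const (Li 2 y)).sub d5).sub d6
    -- The three logarithms of `1 - argument` are combinations of `log (1 - z - y)`,
    -- `log (1 - z)` and `log (1 - y)`; no branch jump occurs since all real parts are positive.
    have l3 : log (1 - z - y) = log (1 - z / (1 - y)) + log (1 - y) := by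
      rw [← log_mul_of_re_pos r3 r2]
      congr 1
      field_simp
      ring
    have l4 : log (1 - z - y) = log (1 - y / (1 - z)) + log (1 - z) := by
      rw [← log_mul_of_re_pos r4 r1]
      congr 1
      field_simp
    have l5 : log (1 - y / (1 - z)) =
        log (1 - z * y / ((1 - z) * (1 - y))) + log (1 - y) := by
      rw [← log_mul_of_re_pos r5 r2]
      congr 1
      field_simp
      ring
    refine key.congr_deriv ?_
    -- `dLi` is given by cases at the origin, so a vanishing `z` or `y` is treated separately.
    by_cases hz0 : z = 0
    · subst hz0
      by_cases hy0 : y = 0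
      · subst hy0
        simp [dLi_zero]
      · simp only [zero_div, zero_mul, sub_zero, div_one, dLi_zero, dLi_of_ne hy0]
        field_simp
        ring
    · by_cases hy0 : y = 0
      · subst hy0
        simp
      · rw [dLi_of_ne (div_ne_zero hz0 ne2), dLi_of_ne (div_ne_zero hy0 ne1), dLi_of_ne hz0,
          dLi_of_ne (div_ne_zero (mul_ne_zero hz0 hy0) (mul_ne_zero ne1 ne2))]
        have e3 : log (1 - z / (1 - y)) = log (1 - z - y) - log (1 - y) := by rw [l3]; ring
        have e4 : log (1 - y / (1 - z)) = log (1 - z - y) - log (1 - z) := by rw [l4]; ring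
        have e5 : log (1 - z * y / ((1 - z) * (1 - y))) =
            log (1 - z - y) - log (1 - z) - log (1 - y) := by rw [← e4, l5]; ring
        rw [e3, e4, e5]
        field_simp
        ring
  have hconst : f x = f 0 := by
    refine Metric.isOpen_ball.is_const_of_deriv_eq_zero (convex_ball (0 : ℂ) (1 - ‖y‖)).isPreconnected
      (fun z hz => (hder z hz).differentiableAt.differentiableWithinAt)
      (fun z hz => (hder z hz).deriv) ?_ ?_
    · rw [mem_ball_zero_iff]; linarith
    · rw [mem_ball_zero_iff, norm_zero]; linarith [norm_nonneg x]
  have h0 : f 0 = 0 := by simp [hf, Li_two_zero]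
  rw [h0] at hconst
  simp only [hf] at hconst
  linear_combination hconst

/-- Landen's relation `Li₂(z) + Li₂(z/(z-1)) = -½ log²(1-z)`, including boundary points
`re w = 1/2`, where `w / (w - 1)` lies on the unit circle. -/
theorem Li_two_landen {w : ℂ} (hw : ‖w‖ < 1) (hre : w.re ≤ 1 / 2) :
    Li 2 w + Li 2 (w / (w - 1)) = -(log (1 - w)) ^ 2 / 2 := by
  set f : ℂ → ℂ := fun z => Li 2 z + Li 2 (z / (z - 1)) + (log (1 - z)) ^ 2 / 2 with hf
  have hnorm : ∀ z : ℂ, z.re ≤ 1 / 2 → ‖z‖ ≤ ‖z - 1‖ := by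
    intro z hz
    rw [← sq_le_sq₀ (norm_nonneg _) (norm_nonneg _), Complex.sq_norm, Complex.sq_norm,
      normSq_apply, normSq_apply]
    simp
    nlinarith
  have hnorm' : ∀ z : ℂ, z.re < 1 / 2 → ‖z‖ < ‖z - 1‖ := by
    intro z hz
    rw [← sq_lt_sq₀ (norm_nonneg _) (norm_nonneg _), Complex.sq_norm, Complex.sq_norm,
      normSq_apply, normSq_apply]
    simp
    nlinarith
  have hder : ∀ z : ℂ, ‖z‖ < 1 → z.re < 1 / 2 → HasDerivAt f 0 z := by
    intro z hz hzre
    have r1 := re_one_sub_pos hz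
    have ne1 : 1 - z ≠ 0 := fun h => by simp [h] at r1
    have ne2 : z - 1 ≠ 0 := fun h => ne1 (by linear_combination -h)
    have h2 : ‖z / (z - 1)‖ < 1 := by
      rw [norm_div, div_lt_one (norm_pos_iff.2 ne2)]
      exact hnorm' z hzre
    have d2 := (Li_two_hasDerivAt h2).comp z
      ((hasDerivAt_id z).div ((hasDerivAt_id z).sub_const 1) ne2)
    have key := ((Li_two_hasDerivAt hz).add d2).add
      (((log_one_sub_hasDerivAt r1).pow 2).div_const 2)
    refine key.congr_deriv ?_
    simp only [id]
    by_cases hz0 : z = 0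
    · subst hz0
      simp [dLi_zero]
    · have e : log (1 - z / (z - 1)) = -log (1 - z) := by
        have harg : (1 - z).arg ≠ Real.pi := by
          have := (abs_lt.1 (Complex.abs_arg_lt_pi_div_two_iff.2 (Or.inl r1))).2
          linarith [Real.pi_pos]
        rw [← Complex.log_inv _ harg]
        congr 1
        field_simp
        ring
      rw [dLi_of_ne hz0, dLi_of_ne (div_ne_zero hz0 ne2), e,
        show 1 - z = -(z - 1) by ring]
      simp
      field_simp
      ring
  -- The segment from `0` to `w` meets the boundary of the region at most at its endpoint `w`,
  -- where continuity of `Li 2` on the closed disc is enough.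
  have hin : ∀ t ∈ Set.Icc (0 : ℝ) 1, ‖(t : ℂ) * w‖ < 1 ∧ ((t : ℂ) * w).re ≤ 1 / 2 := by
    rintro t ⟨h0, h1⟩
    refine ⟨?_, ?_⟩
    · rw [norm_mul, Complex.norm_real, Real.norm_of_nonneg h0]
      nlinarith [norm_nonneg w]
    · rw [re_ofReal_mul]
      nlinarith
  have hc := constant_of_has_deriv_right_zero (f := fun t : ℝ => f ((t : ℂ) * w))
    (a := 0) (b := 1) ?_ ?_ 1 ⟨zero_le_one, le_rfl⟩
  · simp [hf, Li_two_zero] at hc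
    linear_combination hc
  · have hz : ContinuousOn (fun t : ℝ => (t : ℂ) * w) (Set.Icc 0 1) := by fun_prop
    have hne : ∀ t ∈ Set.Icc (0 : ℝ) 1, (t : ℂ) * w - 1 ≠ 0 := by
      intro t ht h
      have := re_one_sub_pos (hin t ht).1
      rw [show 1 - (t : ℂ) * w = 0 by linear_combination -h] at this
      simp at this
    refine ((Li_two_continuousOn.comp hz ?_).add (Li_two_continuousOn.comp
      (hz.div (hz.sub continuousOn_const) hne) ?_)).add
      (((ContinuousOn.clog (continuousOn_const.sub hz) ?_).pow 2).div_const 2)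
    · intro t ht
      exact mem_closedBall_zero_iff.2 (hin t ht).1.le
    · intro t ht
      refine mem_closedBall_zero_iff.2 (?_ : ‖(t : ℂ) * w / ((t : ℂ) * w - 1)‖ ≤ 1)
      rw [norm_div, div_le_one (norm_pos_iff.2 (hne t ht))]
      exact hnorm _ (hin t ht).2
    · intro t ht
      exact Or.inl (re_one_sub_pos (hin t ht).1)
  · rintro t ⟨h0, h1⟩
    have hlt : ((t : ℂ) * w).re < 1 / 2 := by
      rw [re_ofReal_mul]
      nlinarith
    have d1 : HasDerivAt (fun s : ℝ => (s : ℂ) * w) (1 * w) t :=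
      (Complex.ofRealCLM.hasDerivAt (x := t)).mul_const w
    have d2 := (hder _ (hin t ⟨h0, h1.le⟩).1 hlt).comp t d1
    rw [zero_mul] at d2
    exact d2.hasDerivWithinAt

/-- Euler's reflection relation, reduced to its imaginary part; the real constant `π²/6` is not
needed, as the imaginary part can be anchored at the real point `1/2`. -/
theorem Li_two_reflection_im {z : ℂ} (h1 : ‖z‖ < 1) (h2 : ‖1 - z‖ < 1) :
    (Li 2 z).im + (Li 2 (1 - z)).im = -(log z * log (1 - z)).im := by
  set f : ℂ → ℂ := fun z => Li 2 z + Li 2 (1 - z) + log z * log (1 - z) with hf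
  have hmem : ∀ z : ℂ, z ∈ Metric.ball (0 : ℂ) 1 ∩ Metric.ball (1 : ℂ) 1 ↔
      ‖z‖ < 1 ∧ ‖1 - z‖ < 1 := by
    intro z
    rw [Set.mem_inter_iff, mem_ball_zero_iff, mem_ball_iff_norm, norm_sub_rev]
  have hder : ∀ z ∈ Metric.ball (0 : ℂ) 1 ∩ Metric.ball (1 : ℂ) 1, HasDerivAt f 0 z := by
    intro z hz
    obtain ⟨hz1, hz2⟩ := (hmem z).1 hz
    have r1 := re_one_sub_pos hz1
    have r2 : 0 < z.re := by simpa using re_one_sub_pos hz2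
    have ne1 : 1 - z ≠ 0 := fun h => by simp [h] at r1
    have ne2 : z ≠ 0 := fun h => by simp [h] at r2
    have d2 := (Li_two_hasDerivAt hz2).comp z ((hasDerivAt_id z).const_sub 1)
    have key := ((Li_two_hasDerivAt hz1).add d2).add
      ((Complex.hasDerivAt_log (Or.inl r2)).mul (log_one_sub_hasDerivAt r1))
    refine key.congr_deriv ?_
    rw [dLi_of_ne ne1, dLi_of_ne ne2, sub_sub_cancel]
    field_simp
    ring
  have hconst : f z = f (1 / 2) := by
    refine (Metric.isOpen_ball.inter Metric.isOpen_ball).is_const_of_deriv_eq_zero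
      ((convex_ball (0 : ℂ) 1).inter (convex_ball (1 : ℂ) 1)).isPreconnected
      (fun z hz => (hder z hz).differentiableAt.differentiableWithinAt)
      (fun z hz => (hder z hz).deriv) ?_ ?_
    · exact (hmem z).2 ⟨h1, h2⟩
    · rw [hmem]; norm_num
  have hreal : (f (1 / 2)).im = 0 := by
    have e : (1 - 1 / 2 : ℂ) = 1 / 2 := by norm_num
    have hL : (Li 2 (1 / 2)).im = 0 := by
      rw [← Complex.conj_eq_iff_im, ← Li_two_conj]
      rw [show (1 / 2 : ℂ) = ((1 / 2 : ℝ) : ℂ) by norm_num, conj_ofReal]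
    have hl : (log (1 / 2)).im = 0 := by
      rw [log_im, show (1 / 2 : ℂ) = ((1 / 2 : ℝ) : ℂ) by norm_num,
        Complex.arg_ofReal_of_nonneg (by norm_num)]
    simp only [hf, e, add_im, mul_im, hL, hl]
    ring
  rw [← hconst] at hreal
  simp only [hf, add_im] at hreal
  linarith

/-! ### Evaluation at Gaussian rationals -/

theorem log_of_re_pos {z : ℂ} (hz : 0 < z.re) :
    log z = ((Real.log (z.re ^ 2 + z.im ^ 2) / 2 : ℝ) : ℂ) +
      ((Real.arctan (z.im / z.re) : ℝ) : ℂ) * I := by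
  rw [← Complex.re_add_im (log z)]
  congr 3
  · have : z.re ^ 2 + z.im ^ 2 = ‖z‖ ^ 2 := by rw [Complex.sq_norm, normSq_apply]; ring
    rw [log_re, this, Real.log_pow]
    simp
  · rw [log_im]
    have h := abs_lt.1 (Complex.abs_arg_lt_pi_div_two_iff.2 (Or.inl hz))
    rw [← Complex.tan_arg, Real.arctan_tan h.1 h.2]

theorem Li_two_I_im : (Li 2 I).im = catalan' := by
  unfold Li catalan'
  rw [Complex.im_tsum (Li_two_summable (by simp))]
  have hinj : Function.Injective fun m : ℕ => 2 * m := fun a b h => by simpa using h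
  rw [← hinj.tsum_eq]
  · refine tsum_congr fun m => ?_
    rw [pow_succ, pow_mul, I_sq, show ((-1 : ℂ) ^ m * I / ((2 * m + 1 : ℕ) : ℂ) ^ 2) =
      (((-1 : ℝ) ^ m / ((2 * m + 1 : ℕ) : ℝ) ^ 2 : ℝ) : ℂ) * I by push_cast; ring]
    simp only [im_ofReal_mul, I_im, mul_one]
  · intro k hk
    rcases Nat.even_or_odd' k with ⟨m, rfl | rfl⟩
    · exact ⟨m, rfl⟩
    · exfalso
      apply hk
      change (I ^ (2 * m + 1 + 1) / ((2 * m + 1 + 1 : ℕ) : ℂ) ^ 2).im = 0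
      rw [show 2 * m + 1 + 1 = 2 * (m + 1) by ring, pow_mul, I_sq,
        show ((-1 : ℂ) ^ (m + 1) / ((2 * (m + 1) : ℕ) : ℂ) ^ 2) =
        (((-1 : ℝ) ^ (m + 1) / ((2 * (m + 1) : ℕ) : ℝ) ^ 2 : ℝ) : ℂ) by push_cast; ring]
      exact ofReal_im _

theorem Li_two_im_of_conj {z w : ℂ} (h : w = starRingEnd ℂ z) : (Li 2 w).im = -(Li 2 z).im := by
  rw [h, Li_two_conj, conj_im]

theorem catalan_dilog :
    catalan' = (3 * Li 2 ((1 + I) / 2) - Li 2 ((1 + I) / 4) + (3 / 2) * Li 2 (-I / 2)).im := by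
  have norm_lt : ∀ (z : ℂ) (r : ℝ), 0 ≤ r → z.re ^ 2 + z.im ^ 2 < r ^ 2 → ‖z‖ < r := by
    intro z r hr h
    rw [← sq_lt_sq₀ (norm_nonneg _) hr, Complex.sq_norm, normSq_apply]
    linarith
  have l1 : log ((3 - I) / 4) = ((Real.log (5 / 8) / 2 : ℝ) : ℂ) +
      ((-Real.arctan 3⁻¹ : ℝ) : ℂ) * I := by
    rw [log_of_re_pos (by norm_num), ← Real.arctan_neg]
    norm_num
  have l2 : log (1 / 2) = ((-Real.log 2 : ℝ) : ℂ) + ((0 : ℝ) : ℂ) * I := by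
    rw [show (1 / 2 : ℂ) = ((2⁻¹ : ℝ) : ℂ) by norm_num, ← ofReal_log (by norm_num), Real.log_inv]
    simp
  have l3 : log ((3 - I) / 5) = ((Real.log (2 / 5) / 2 : ℝ) : ℂ) +
      ((-Real.arctan 3⁻¹ : ℝ) : ℂ) * I := by
    rw [log_of_re_pos (by norm_num), ← Real.arctan_neg]
    norm_num
  have l4 : log ((3 + I) / 5) = ((Real.log (2 / 5) / 2 : ℝ) : ℂ) +
      ((Real.arctan 3⁻¹ : ℝ) : ℂ) * I := by
    rw [log_of_re_pos (by norm_num)]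
    norm_num
  have l5 : log ((2 - I) / 5) = ((Real.log (1 / 5) / 2 : ℝ) : ℂ) +
      ((-Real.arctan 2⁻¹ : ℝ) : ℂ) * I := by
    rw [log_of_re_pos (by norm_num), ← Real.arctan_neg]
    norm_num
  have l6 : log ((2 - I) / 2) = ((Real.log (5 / 4) / 2 : ℝ) : ℂ) +
      ((-Real.arctan 2⁻¹ : ℝ) : ℂ) * I := by
    rw [log_of_re_pos (by norm_num), ← Real.arctan_neg]
    norm_num
  have l7 : log ((1 - I) / 2) = ((Real.log (1 / 2) / 2 : ℝ) : ℂ) +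
      ((-(Real.pi / 4) : ℝ) : ℂ) * I := by
    rw [log_of_re_pos (by norm_num), ← Real.arctan_one, ← Real.arctan_neg]
    norm_num
  have ne3 : (3 - I) ≠ 0 := fun h => by simpa using congrArg Complex.re h
  have ne2 : (2 - I) ≠ 0 := fun h => by simpa using congrArg Complex.re h
  have ne1 : (1 - I) ≠ 0 := fun h => by simpa using congrArg Complex.re h
  have R1 : (Li 2 ((1 + I) / 2)).im + (Li 2 ((3 + I) / 5)).im - (Li 2 ((1 + I) / 4)).im
      - (Li 2 ((1 + 2 * I) / 5)).im = Real.arctan 3⁻¹ * Real.log 2 := by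
    have hx : ‖(1 + I) / 4‖ < 2 / 5 := norm_lt _ _ (by norm_num) (by norm_num)
    have h := Li_two_abel (x := (1 + I) / 4) (y := 1 / 2) (by
      have : ‖(1 / 2 : ℂ)‖ = 1 / 2 := by norm_num
      linarith)
    have hreal : (Li 2 (1 / 2)).im = 0 := by
      have := Li_two_im_of_conj (z := 1 / 2) (w := 1 / 2) (by simp [map_ofNat])
      linarith
    have e0 : 1 - (1 + I) / 4 = (3 - I) / 4 := by ring
    have e1 : (1 - 1 / 2 : ℂ) = 1 / 2 := by norm_num
    have e2 : (1 + I) / 4 / (1 / 2) = (1 + I) / 2 := by ring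
    have e3 : 1 / 2 / ((3 - I) / 4) = (3 + I) / 5 := by
      field_simp
      linear_combination 2 * I_sq
    have e4 : (1 + I) / 4 * (1 / 2) / ((3 - I) / 4 * (1 / 2)) = (1 + 2 * I) / 5 := by
      field_simp
      linear_combination 2 * I_sq
    rw [e0, e1, e2, e3, e4, l1, l2] at h
    have h' := congrArg Complex.im h
    simp only [sub_im, add_im, hreal, mul_im, add_re, re_ofReal_mul, ofReal_re,
      ofReal_im, I_re, I_im] at h'
    linear_combination h'
  have R2 : 2 * (Li 2 ((1 + I) / 2)).im - 2 * (Li 2 ((2 + I) / 5)).im - (Li 2 (I / 2)).im =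
      -Real.arctan 3⁻¹ * Real.log (2 / 5) := by
    have hx : ‖(2 + I) / 5‖ < 1 / 2 := norm_lt _ _ (by norm_num) (by norm_num)
    have h := Li_two_abel (x := (2 + I) / 5) (y := (2 + I) / 5) (by linarith)
    have e0 : 1 - (2 + I) / 5 = (3 - I) / 5 := by ring
    have e2 : (2 + I) / 5 / ((3 - I) / 5) = (1 + I) / 2 := by
      field_simp
      linear_combination I_sq
    have e3 : (2 + I) / 5 * ((2 + I) / 5) / ((3 - I) / 5 * ((3 - I) / 5)) = I / 2 := by
      rw [mul_div_mul_comm, e2]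
      linear_combination I_sq / 4
    rw [e0, e2, e3, l3] at h
    have h' := congrArg Complex.im h
    simp only [sub_im, add_im, mul_im, add_re, re_ofReal_mul, ofReal_re,
      ofReal_im, I_re, I_im] at h'
    linear_combination h'
  have R3 : (Li 2 ((3 + I) / 5)).im - (Li 2 ((2 + I) / 5)).im =
      Real.arctan 2⁻¹ * (Real.log (2 / 5) / 2) - Real.arctan 3⁻¹ * (Real.log (1 / 5) / 2) := by
    have e0 : 1 - (3 + I) / 5 = (2 - I) / 5 := by ring
    have h := Li_two_reflection_im (z := (3 + I) / 5)
      (norm_lt _ _ (by norm_num) (by norm_num))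
      (by rw [e0]; exact norm_lt _ _ (by norm_num) (by norm_num))
    rw [e0, l4, l5, Li_two_im_of_conj (z := (2 + I) / 5) (w := (2 - I) / 5)
      (by simp [map_ofNat, sub_eq_add_neg])] at h
    simp only [add_im, mul_im, add_re, re_ofReal_mul, ofReal_re, ofReal_im, I_re, I_im] at h
    linear_combination h
  have R4 : (Li 2 (I / 2)).im - (Li 2 ((1 + 2 * I) / 5)).im =
      Real.arctan 2⁻¹ * (Real.log (5 / 4) / 2) := by
    have h := Li_two_landen (w := I / 2) (norm_lt _ _ (by norm_num) (by norm_num)) (by norm_num)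
    have e0 : 1 - I / 2 = (2 - I) / 2 := by ring
    have e1 : I / 2 / (I / 2 - 1) = (1 - 2 * I) / 5 := by
      rw [show I / 2 - 1 = -((2 - I) / 2) by ring]
      field_simp
      linear_combination -2 * I_sq
    rw [e0, e1, l6] at h
    have h' := congrArg Complex.im h
    rw [add_im, Li_two_im_of_conj (z := (1 + 2 * I) / 5) (w := (1 - 2 * I) / 5)
      (by simp [map_ofNat, sub_eq_add_neg])] at h'
    simp only [div_ofNat_im, neg_im, pow_two, add_im, mul_im, add_re, re_ofReal_mul, ofReal_re, ofReal_im, I_re, I_im] at h'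
    linear_combination h'
  have R5 : (Li 2 ((1 + I) / 2)).im - catalan' = Real.pi / 4 * (Real.log (1 / 2) / 2) := by
    have h := Li_two_landen (w := (1 + I) / 2) (norm_lt _ _ (by norm_num) (by norm_num))
      (by norm_num)
    have e0 : 1 - (1 + I) / 2 = (1 - I) / 2 := by ring
    have e1 : (1 + I) / 2 / ((1 + I) / 2 - 1) = -I := by
      rw [show (1 + I) / 2 - 1 = -((1 - I) / 2) by ring]
      field_simp
      linear_combination -I_sq
    rw [e0, e1, l7] at h
    have h' := congrArg Complex.im h
    rw [add_im, Li_two_im_of_conj (z := I) (w := -I) (by simp), Li_two_I_im] at h'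
    simp only [div_ofNat_im, neg_im, pow_two, add_im, mul_im, add_re, re_ofReal_mul, ofReal_re, ofReal_im, I_re, I_im] at h'
    linear_combination h'
  have hconj : (Li 2 (-I / 2)).im = -(Li 2 (I / 2)).im :=
    Li_two_im_of_conj (by simp [map_ofNat])
  have hgoal : (3 * Li 2 ((1 + I) / 2) - Li 2 ((1 + I) / 4) + (3 / 2) * Li 2 (-I / 2)).im =
      3 * (Li 2 ((1 + I) / 2)).im - (Li 2 ((1 + I) / 4)).im - 3 / 2 * (Li 2 (I / 2)).im := by
    rw [show (3 / 2 : ℂ) = ((3 / 2 : ℝ) : ℂ) by norm_num, show (3 : ℂ) = ((3 : ℝ) : ℂ) by norm_num,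
      add_im, sub_im, im_ofReal_mul, im_ofReal_mul, hconj]
    ring
  have hangle := Real.arctan_inv_2_add_arctan_inv_3
  have g1 : Real.log (2 / 5) = Real.log 2 - Real.log 5 := Real.log_div (by norm_num) (by norm_num)
  have g2 : Real.log (1 / 5) = -Real.log 5 := by rw [one_div, Real.log_inv]
  have g3 : Real.log (1 / 2) = -Real.log 2 := by rw [one_div, Real.log_inv]
  have g4 : Real.log (5 / 4) = Real.log 5 - 2 * Real.log 2 := by
    rw [Real.log_div (by norm_num) (by norm_num), show (4 : ℝ) = 2 ^ 2 by norm_num, Real.log_pow]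
    norm_num
  rw [g1] at R2 R3
  rw [g2] at R3
  rw [g4] at R4
  rw [g3] at R5
  rw [hgoal]
  -- The `log 5` terms cancel, and the `log 2` terms collect to a multiple of `arctan (1/2) + arctan (1/3)`.
  linear_combination -R5 - (R2 + 2 * R1) / 2 + R3 + R4 - Real.log 2 / 2 * hangle
end

section
/- Re Li₃((1+i)/2) = (35/64)·ζ(3) + (log³2)/48 − (5 π² log 2)/192. -/
/-!
For `z` in the part of `{|z| < 1, |1 - z| < 1}` with `Re z > 1 / 2`, Landen's identity reads
`Li₃(z) + Li₃(1 - z) + Li₃(1 - 1/z) = ζ(3) + log³ z / 6 + π²/6 log z - log² z log(1 - z) / 2`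
(proved on a segment in `trilog_landen`). At `z = (1 + i) / 2` one has `1 - z = conj z` and
`1 - 1/z = i`, so the left side has real part `2 Re Li₃(z) + Re Li₃(i)`. The duplication formula `Li₃(w) + Li₃(-w) = Li₃(w²) / 4`
at `w = 1` and `w = i` gives `Re Li₃(i) = -3/32 ζ(3)`, and `log z = -log 2 / 2 + iπ/4`.

Landen's identity is proved along the segment from `1` to `(1 + i) / 2`, which except for its
endpoints stays in that region: the difference of the two sides has derivative zero there by the
reflection and Landen formulas for `Li₂`, and these follow in the same way from
`Li₁(z) = -log(1 - z)`. The constants are found by letting `z → 1`, where the series are continuous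
(`Li_continuousOn`) and `log z log(1 - z) → 0`.
-/

open Complex

/-- `ζ(3) = ∑_{k ≥ 1} 1/k³`. -/
noncomputable def zeta3 : ℝ := ∑' k : ℕ, (1 : ℝ) / ((k + 1 : ℕ) : ℝ) ^ 3

open Filter Topology Set

/-! ### The polylogarithm series on the unit disc -/

lemma Li_summable_bound (n : ℕ) (hn : 2 ≤ n) :
    Summable fun k : ℕ => (1 : ℝ) / ((k + 1 : ℕ) : ℝ) ^ n :=
  (summable_nat_add_iff 1).2 (Real.summable_one_div_nat_pow.2 hn)

lemma Li_term_norm_le (n : ℕ) {z : ℂ} (hz : ‖z‖ ≤ 1) (k : ℕ) :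
    ‖z ^ (k + 1) / ((k + 1 : ℕ) : ℂ) ^ n‖ ≤ 1 / ((k + 1 : ℕ) : ℝ) ^ n := by
  rw [norm_div, norm_pow, norm_pow, Complex.norm_natCast]
  gcongr
  exact pow_le_one₀ (norm_nonneg _) hz

lemma Li_summable (n : ℕ) (hn : 2 ≤ n) {z : ℂ} (hz : ‖z‖ ≤ 1) :
    Summable fun k : ℕ => z ^ (k + 1) / ((k + 1 : ℕ) : ℂ) ^ n :=
  Summable.of_norm_bounded (Li_summable_bound n hn) (Li_term_norm_le n hz)

lemma Li_continuousOn (n : ℕ) (hn : 2 ≤ n) : ContinuousOn (Li n) (Metric.closedBall 0 1) := by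
  unfold Li
  refine continuousOn_tsum (fun k => by fun_prop) (Li_summable_bound n hn) ?_
  intro k z hz
  exact Li_term_norm_le n (by simpa using hz) k

lemma Li_hasDerivAt (n : ℕ) {z : ℂ} (hz : ‖z‖ < 1) (h0 : z ≠ 0) :
    HasDerivAt (Li (n + 1)) (Li n z / z) z := by
  obtain ⟨r, hr, hr1⟩ := exists_between hz
  have hr0 : 0 ≤ r := (norm_nonneg _).trans hr.le
  have key := hasDerivAt_tsum_of_isPreconnected (𝕜 := ℂ) (F := ℂ) (t := Metric.ball 0 r)
    (g := fun (k : ℕ) (z : ℂ) => z ^ (k + 1) / ((k + 1 : ℕ) : ℂ) ^ (n + 1))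
    (g' := fun (k : ℕ) (z : ℂ) => z ^ k / ((k + 1 : ℕ) : ℂ) ^ n)
    (u := fun k => r ^ k) (y₀ := 0) (y := z)
    (summable_geometric_of_lt_one hr0 hr1) Metric.isOpen_ball
    (convex_ball _ _).isPreconnected ?_ ?_ ?_ ?_ ?_
  · refine HasDerivAt.congr_deriv (f := Li (n + 1)) key ?_
    rw [Li, ← tsum_div_const]
    refine tsum_congr fun k => ?_
    field_simp
    ring
  · intro k y _
    refine ((hasDerivAt_pow (k + 1) y).div_const (((k + 1 : ℕ) : ℂ) ^ (n + 1))).congr_deriv ?_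
    have : ((k + 1 : ℕ) : ℂ) ≠ 0 := Nat.cast_ne_zero.2 k.succ_ne_zero
    simp only [Nat.add_sub_cancel]
    field_simp
    ring
  · intro k y hy
    rw [norm_div, norm_pow, norm_pow, Complex.norm_natCast]
    have hy : ‖y‖ < r := by simpa using hy
    have h1 : (1 : ℝ) ≤ ((k + 1 : ℕ) : ℝ) ^ n := one_le_pow₀ (by simp)
    exact (div_le_self (by positivity) h1).trans (by gcongr)
  · simpa using (norm_nonneg z).trans_lt hr
  · simp
  · simpa using hr

lemma Li_one {z : ℂ} (hz : ‖z‖ < 1) : Li 1 z = -log (1 - z) := by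
  have h := Complex.hasSum_taylorSeries_neg_log hz
  rw [← h.tsum_eq, h.summable.tsum_eq_zero_add, Li]
  simp

lemma Li_zero (n : ℕ) : Li n 0 = 0 := by simp [Li]

/-! ### Special values -/

lemma Li_three_one : Li 3 1 = (zeta3 : ℂ) := by
  rw [Li, zeta3, Complex.ofReal_tsum]
  simp

lemma Li_two_one : Li 2 1 = (Real.pi : ℂ) ^ 2 / 6 := by
  have h := hasSum_zeta_two
  have h2 := (h.summable.tsum_eq_zero_add).symm.trans h.tsum_eq
  have h3 := congrArg Complex.ofReal h2
  rw [Complex.ofReal_add, Complex.ofReal_tsum] at h3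
  simpa [Li] using h3

/-- Splitting a polylogarithm series into even and odd powers. -/
lemma Li_three_duplication {z : ℂ} (hz : ‖z‖ ≤ 1) :
    Li 3 z + Li 3 (-z) = Li 3 (z ^ 2) / 4 := by
  have h1 := Li_summable 3 (by norm_num) hz
  have h2 := Li_summable 3 (by norm_num) (z := -z) (by simpa using hz)
  have h3 := Li_summable 3 (by norm_num) (z := z ^ 2)
    (by rw [norm_pow]; exact pow_le_one₀ (norm_nonneg _) hz)
  have hodd : HasSum (fun k : ℕ => z ^ (2 * k + 1) / ((2 * k + 1 : ℕ) : ℂ) ^ 3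
      + (-z) ^ (2 * k + 1) / ((2 * k + 1 : ℕ) : ℂ) ^ 3) 0 := by
    convert hasSum_zero (α := ℂ) (β := ℕ) using 2 with k
    rw [Odd.neg_pow ⟨k, rfl⟩]; ring
  have heven : HasSum (fun k : ℕ => z ^ (2 * k + 1 + 1) / ((2 * k + 1 + 1 : ℕ) : ℂ) ^ 3
      + (-z) ^ (2 * k + 1 + 1) / ((2 * k + 1 + 1 : ℕ) : ℂ) ^ 3) (Li 3 (z ^ 2) / 4) := by
    have hk : (fun k : ℕ => z ^ (2 * k + 1 + 1) / ((2 * k + 1 + 1 : ℕ) : ℂ) ^ 3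
        + (-z) ^ (2 * k + 1 + 1) / ((2 * k + 1 + 1 : ℕ) : ℂ) ^ 3)
        = fun k : ℕ => (z ^ 2) ^ (k + 1) / ((k + 1 : ℕ) : ℂ) ^ 3 / 4 := by
      funext k
      have : ((k + 1 : ℕ) : ℂ) ≠ 0 := Nat.cast_ne_zero.2 k.succ_ne_zero
      rw [Even.neg_pow ⟨k + 1, by ring⟩, ← pow_mul,
        show 2 * k + 1 + 1 = 2 * (k + 1) by ring, Nat.cast_mul, Nat.cast_ofNat, mul_pow]
      field_simp
      ring
    rw [hk]
    exact h3.hasSum.div_const 4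
  have hsum := HasSum.even_add_odd (f := fun k : ℕ => z ^ (k + 1) / ((k + 1 : ℕ) : ℂ) ^ 3
    + (-z) ^ (k + 1) / ((k + 1 : ℕ) : ℂ) ^ 3) hodd heven
  rw [zero_add] at hsum
  exact (h1.hasSum.add h2.hasSum).unique hsum

lemma Li_conj (n : ℕ) (z : ℂ) : Li n ((starRingEnd ℂ) z) = (starRingEnd ℂ) (Li n z) := by
  rw [Li, Li, Complex.conj_tsum]
  simp

lemma Li_three_I_re : (Li 3 I).re = -(3 / 32) * zeta3 := by
  have h1 := Li_three_duplication (z := 1) (by simp)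
  have h2 := Li_three_duplication (z := I) (by simp)
  rw [← Complex.conj_I, Li_conj, I_sq] at h2
  rw [one_pow, Li_three_one] at h1
  have h1' := congrArg Complex.re h1
  have h2' := congrArg Complex.re h2
  rw [show (4 : ℂ) = ((4 : ℝ) : ℂ) by norm_num, Complex.div_ofReal_re] at h1' h2'
  simp only [Complex.add_re, Complex.conj_re, Complex.ofReal_re] at h1' h2'
  linarith

/-! ### The segment and the half-lens -/

/-- The segment from `1` (at `t = 0`) to `(1 + i) / 2` (at `t = 1`). -/
noncomputable def seg (t : ℝ) : ℂ := 1 - t * ((1 - I) / 2)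

lemma seg_re (t : ℝ) : (seg t).re = 1 - t / 2 := by
  simp [seg]; ring

lemma seg_im (t : ℝ) : (seg t).im = t / 2 := by
  simp [seg]; ring

lemma seg_zero : seg 0 = 1 := by simp [seg]

lemma seg_one : seg 1 = (1 + I) / 2 := by simp [seg]; ring

lemma seg_continuous : Continuous seg := by unfold seg; fun_prop

lemma seg_hasDerivAt (t : ℝ) : HasDerivAt seg (-((1 - I) / 2)) t := by
  have h := ((hasDerivAt_id t).ofReal_comp.mul_const ((1 - I) / 2)).const_sub 1
  refine HasDerivAt.congr_deriv (f := seg) h ?_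
  simp

lemma seg_normSq (t : ℝ) : normSq (seg t) = 1 - t + t ^ 2 / 2 := by
  rw [normSq_apply, seg_re, seg_im]; ring

lemma one_sub_seg_normSq (t : ℝ) : normSq (1 - seg t) = t ^ 2 / 2 := by
  rw [normSq_apply, sub_re, sub_im, seg_re, seg_im]; simp; ring

/-- The half-lens `|z| < 1`, `|1 - z| < 1`, `Re z > 1 / 2`, described by the properties that are used:
`z`, `1 - z` and `1 - 1 / z` lie in the open unit disc, and `z` and `1 - z` lie off the branch cut
of `log`. -/
structure InHalfLens (z : ℂ) : Prop where
  norm_lt : ‖z‖ < 1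
  norm_one_sub_lt : ‖1 - z‖ < 1
  norm_one_sub_inv_lt : ‖1 - z⁻¹‖ < 1
  slit : z ∈ slitPlane
  slit_one_sub : 1 - z ∈ slitPlane

lemma norm_lt_of_normSq {z : ℂ} (h : normSq z < 1) : ‖z‖ < 1 := by
  rw [normSq_eq_norm_sq] at h
  nlinarith [norm_nonneg z]

lemma seg_ne_zero {t : ℝ} (ht : t ≤ 1) : seg t ≠ 0 := by
  intro h
  have := congrArg Complex.re h
  rw [seg_re, zero_re] at this
  linarith

lemma seg_good {t : ℝ} (ht : t ∈ Ioo (0 : ℝ) 1) : InHalfLens (seg t) := by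
  obtain ⟨h0, h1⟩ := ht
  have hne := seg_ne_zero h1.le
  refine ⟨norm_lt_of_normSq ?_, norm_lt_of_normSq ?_, norm_lt_of_normSq ?_, Or.inl ?_, Or.inl ?_⟩
  · rw [seg_normSq]; nlinarith
  · rw [one_sub_seg_normSq]; nlinarith
  · have e : 1 - (seg t)⁻¹ = -(1 - seg t) / seg t := by field_simp; ring
    rw [e, normSq_div, normSq_neg, one_sub_seg_normSq, seg_normSq, div_lt_one (by nlinarith)]
    linarith
  · rw [seg_re]; linarith
  · rw [sub_re, seg_re]; simp; linarith

lemma InHalfLens.ne_zero {z : ℂ} (h : InHalfLens z) : z ≠ 0 := slitPlane_ne_zero h.slit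

lemma InHalfLens.one_sub_ne_zero {z : ℂ} (h : InHalfLens z) : 1 - z ≠ 0 := slitPlane_ne_zero h.slit_one_sub

lemma InHalfLens.one_sub_inv_ne_zero {z : ℂ} (h : InHalfLens z) : 1 - z⁻¹ ≠ 0 := by
  have h0 := h.ne_zero
  have h1 := h.one_sub_ne_zero
  intro e
  apply h1
  field_simp at e
  linear_combination -e

/-- A function with zero derivative along the open segment equals its limit at the endpoint `1`. -/
lemma eq_of_seg {F : ℂ → ℂ} {c : ℂ} (hF : ∀ s ∈ Ioo (0 : ℝ) 1, HasDerivAt F 0 (seg s))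
    (hc : Tendsto (fun t => F (seg t)) (𝓝[>] 0) (𝓝 c)) {t : ℝ} (ht : t ∈ Ioo (0 : ℝ) 1) :
    F (seg t) = c := by
  have hd : ∀ s ∈ Ioo (0 : ℝ) 1, HasDerivAt (fun t => F (seg t)) 0 s := by
    intro s hs
    exact (HasDerivAt.comp s (hF s hs) (seg_hasDerivAt s)).congr_deriv (zero_mul _)
  refine tendsto_nhds_unique (tendsto_const_nhds.congr' ?_) hc
  filter_upwards [Ioo_mem_nhdsGT ht.1] with s hs
  refine constant_of_has_deriv_right_zero (a := s) (b := t) (f := fun t => F (seg t))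
    (fun x hx => ?_) (fun x hx => ?_) t (right_mem_Icc.2 hs.2.le)
  · exact (hd x ⟨hs.1.trans_le hx.1, hx.2.trans_lt ht.2⟩).continuousAt.continuousWithinAt
  · exact (hd x ⟨hs.1.trans_le hx.1, hx.2.trans ht.2⟩).hasDerivWithinAt

lemma InHalfLens.Li_hasDerivAt {z : ℂ} (h : InHalfLens z) (n : ℕ) :
    HasDerivAt (Li (n + 1)) (Li n z / z) z := _root_.Li_hasDerivAt n h.norm_lt h.ne_zero

lemma InHalfLens.Li_one_sub_hasDerivAt {z : ℂ} (h : InHalfLens z) (n : ℕ) :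
    HasDerivAt (fun z => Li (n + 1) (1 - z)) (-(Li n (1 - z) / (1 - z))) z := by
  exact (HasDerivAt.comp z (_root_.Li_hasDerivAt n h.norm_one_sub_lt h.one_sub_ne_zero)
    ((hasDerivAt_id z).const_sub 1)).congr_deriv (by simp)

lemma InHalfLens.Li_one_sub_inv_hasDerivAt {z : ℂ} (h : InHalfLens z) (n : ℕ) :
    HasDerivAt (fun z => Li (n + 1) (1 - z⁻¹)) (-(Li n (1 - z⁻¹) / (z * (1 - z)))) z := by
  have h0 := h.ne_zero
  have h1 := h.one_sub_ne_zero
  have h2 := h.one_sub_inv_ne_zero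
  refine (HasDerivAt.comp z (_root_.Li_hasDerivAt n h.norm_one_sub_inv_lt h.one_sub_inv_ne_zero)
    ((hasDerivAt_inv h0).const_sub 1)).congr_deriv ?_
  have e : 1 - z⁻¹ = -(1 - z) / z := by field_simp; ring
  generalize Li n (1 - z⁻¹) = L
  rw [e]
  field_simp

lemma InHalfLens.log_hasDerivAt {z : ℂ} (h : InHalfLens z) : HasDerivAt log z⁻¹ z :=
  Complex.hasDerivAt_log h.slit

lemma InHalfLens.log_one_sub_hasDerivAt {z : ℂ} (h : InHalfLens z) :
    HasDerivAt (fun z => log (1 - z)) (-(1 - z)⁻¹) z := by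
  exact (HasDerivAt.comp z (Complex.hasDerivAt_log h.slit_one_sub)
    ((hasDerivAt_id z).const_sub 1)).congr_deriv (by simp)

/-! ### Limits at the endpoint `1` -/

/-- `log z * log (1 - z) → 0` as `z → 1`: the first factor is `O(1 - z)`. -/
lemma tendsto_log_mul_log :
    Tendsto (fun t => log (seg t) * log (1 - seg t)) (𝓝[>] 0) (𝓝 0) := by
  set a : ℂ := (1 - I) / 2 with ha
  have ha0 : a ≠ 0 := by
    intro h
    have := congrArg Complex.re h
    norm_num [ha] at this
  have hd : HasDerivAt (fun t => log (seg t)) ((seg 0)⁻¹ * -a) 0 :=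
    HasDerivAt.comp (0 : ℝ) (Complex.hasDerivAt_log (by rw [seg_zero]; exact one_mem_slitPlane))
      (seg_hasDerivAt 0)
  have h1 := hd.tendsto_slope.mono_left (nhdsWithin_mono (0 : ℝ) (fun x (hx : 0 < x) => hx.ne'))
  have h2 : Tendsto (fun t : ℝ => ((t * Real.log t : ℝ) : ℂ) + t * log a) (𝓝[>] 0)
      (𝓝 (((0 : ℝ) : ℂ) + ((0 : ℝ) : ℂ) * log a)) := by
    refine Tendsto.add ?_ (Tendsto.mul_const _ ?_)
    · refine (Complex.continuous_ofReal.tendsto _).comp ?_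
      simpa using (Real.continuous_mul_log.tendsto 0).mono_left nhdsWithin_le_nhds
    · exact (Complex.continuous_ofReal.tendsto _).mono_left nhdsWithin_le_nhds
  have h3 := h1.mul h2
  simp only [ofReal_zero, zero_mul, add_zero, mul_zero] at h3
  refine h3.congr' ?_
  filter_upwards [self_mem_nhdsWithin] with t (ht : 0 < t)
  have e : 1 - seg t = t * a := by simp [seg, ha]
  rw [e, Complex.log_ofReal_mul ht ha0, slope_def_module, seg_zero, log_one]
  have : (t : ℂ) ≠ 0 := by exact_mod_cast ht.ne'
  simp only [sub_zero, Complex.real_smul]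
  push_cast
  field_simp

lemma tendsto_log_seg : Tendsto (fun t => log (seg t)) (𝓝[>] 0) (𝓝 0) := by
  have : ContinuousAt (fun t => log (seg t)) 0 :=
    (seg_continuous.continuousAt).clog (by rw [seg_zero]; exact one_mem_slitPlane)
  have h := this.tendsto.mono_left (nhdsWithin_le_nhds (s := Ioi 0))
  simpa [seg_zero] using h

/-- Limits of `Li n`, `n ≥ 2`, along a curve in the open unit disc whose endpoint may lie on the
unit circle. -/
lemma tendsto_Li {l : Filter ℝ} {g : ℝ → ℂ} {w : ℂ} (n : ℕ) (hn : 2 ≤ n)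
    (hg : Tendsto g l (𝓝 w)) (hw : ‖w‖ ≤ 1) (hb : ∀ᶠ t in l, ‖g t‖ < 1) :
    Tendsto (fun t => Li n (g t)) l (𝓝 (Li n w)) := by
  refine Tendsto.comp (Li_continuousOn n hn w (by simpa using hw)) ?_
  refine tendsto_nhdsWithin_iff.2 ⟨hg, hb.mono fun t ht => by simpa using ht.le⟩

lemma eventually_good_zero : ∀ᶠ t in 𝓝[>] (0 : ℝ), InHalfLens (seg t) := by
  filter_upwards [Ioo_mem_nhdsGT one_pos] with t ht using seg_good ht

lemma eventually_good_one : ∀ᶠ t in 𝓝[<] (1 : ℝ), InHalfLens (seg t) := by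
  filter_upwards [Ioo_mem_nhdsLT one_pos] with t ht using seg_good ht

lemma tendsto_Li_seg (n : ℕ) (hn : 2 ≤ n) :
    Tendsto (fun t => Li n (seg t)) (𝓝[>] 0) (𝓝 (Li n 1)) := by
  refine tendsto_Li n hn ?_ (by simp) (eventually_good_zero.mono fun t h => h.norm_lt)
  simpa [seg_zero] using (seg_continuous.tendsto 0).mono_left nhdsWithin_le_nhds

lemma tendsto_Li_one_sub_seg (n : ℕ) (hn : 2 ≤ n) :
    Tendsto (fun t => Li n (1 - seg t)) (𝓝[>] 0) (𝓝 0) := by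
  rw [← Li_zero n]
  refine tendsto_Li n hn ?_ (by simp) (eventually_good_zero.mono fun t h => h.norm_one_sub_lt)
  have h : Tendsto (fun t => 1 - seg t) (𝓝 0) (𝓝 (1 - seg 0)) :=
    (continuous_const.sub seg_continuous).tendsto 0
  simpa [seg_zero] using h.mono_left nhdsWithin_le_nhds

lemma tendsto_Li_one_sub_inv_seg (n : ℕ) (hn : 2 ≤ n) :
    Tendsto (fun t => Li n (1 - (seg t)⁻¹)) (𝓝[>] 0) (𝓝 0) := by
  rw [← Li_zero n]
  refine tendsto_Li n hn ?_ (by simp) (eventually_good_zero.mono fun t h => h.norm_one_sub_inv_lt)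
  have h : Tendsto (fun t => 1 - (seg t)⁻¹) (𝓝 0) (𝓝 (1 - (seg 0)⁻¹)) :=
    (((seg_continuous.tendsto 0).inv₀ (by simp [seg_zero])).const_sub 1)
  simpa [seg_zero] using h.mono_left nhdsWithin_le_nhds

/-! ### Functional equations -/

/-- Euler's reflection formula for the dilogarithm. -/
lemma dilog_reflection {t : ℝ} (ht : t ∈ Ioo (0 : ℝ) 1) :
    Li 2 (seg t) + Li 2 (1 - seg t) + log (seg t) * log (1 - seg t) = (Real.pi : ℂ) ^ 2 / 6 := by
  refine eq_of_seg (F := fun z => Li 2 z + Li 2 (1 - z) + log z * log (1 - z)) ?_ ?_ ht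
  · intro s hs
    have hz := seg_good hs
    have h0 := hz.ne_zero
    have h1 := hz.one_sub_ne_zero
    refine (((hz.Li_hasDerivAt 1).add (hz.Li_one_sub_hasDerivAt 1)).add
      (hz.log_hasDerivAt.mul hz.log_one_sub_hasDerivAt)).congr_deriv ?_
    rw [Li_one hz.norm_lt, Li_one hz.norm_one_sub_lt, sub_sub_cancel]
    field_simp
    ring
  · have h := ((tendsto_Li_seg 2 le_rfl).add (tendsto_Li_one_sub_seg 2 le_rfl)).add
      tendsto_log_mul_log
    simpa [Li_two_one] using h

/-- Landen's transformation of the dilogarithm. -/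
lemma dilog_landen {t : ℝ} (ht : t ∈ Ioo (0 : ℝ) 1) :
    Li 2 (1 - (seg t)⁻¹) + Li 2 (1 - seg t) + log (seg t) ^ 2 / 2 = 0 := by
  refine eq_of_seg (F := fun z => Li 2 (1 - z⁻¹) + Li 2 (1 - z) + log z ^ 2 / 2) ?_ ?_ ht
  · intro s hs
    have hz := seg_good hs
    have h0 := hz.ne_zero
    have h1 := hz.one_sub_ne_zero
    refine (((hz.Li_one_sub_inv_hasDerivAt 1).add (hz.Li_one_sub_hasDerivAt 1)).add
      ((hz.log_hasDerivAt.pow 2).div_const 2)).congr_deriv ?_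
    rw [Li_one hz.norm_one_sub_inv_lt, Li_one hz.norm_one_sub_lt, sub_sub_cancel, sub_sub_cancel,
      Complex.log_inv _ (slitPlane_arg_ne_pi hz.slit)]
    field_simp
    push_cast
    ring
  · have h := ((tendsto_Li_one_sub_inv_seg 2 le_rfl).add (tendsto_Li_one_sub_seg 2 le_rfl)).add
      ((tendsto_log_seg.pow 2).div_const 2)
    simpa using h

/-- Landen's three-term identity for the trilogarithm, on the open segment. -/
lemma trilog_landen {t : ℝ} (ht : t ∈ Ioo (0 : ℝ) 1) :
    Li 3 (seg t) + Li 3 (1 - seg t) + Li 3 (1 - (seg t)⁻¹)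
      - ((Real.pi : ℂ) ^ 2 / 6 * log (seg t) + log (seg t) ^ 3 / 6
        - log (seg t) * (log (seg t) * log (1 - seg t)) / 2) = zeta3 := by
  have hd : ∀ s ∈ Ioo (0 : ℝ) 1, HasDerivAt (fun z => Li 3 z + Li 3 (1 - z) + Li 3 (1 - z⁻¹)
      - ((Real.pi : ℂ) ^ 2 / 6 * log z + log z ^ 3 / 6
        - log z * (log z * log (1 - z)) / 2)) 0 (seg s) := by
    intro s hs
    have hz := seg_good hs
    have h0 := hz.ne_zero
    have h1 := hz.one_sub_ne_zero
    have e1 := dilog_reflection hs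
    have e2 := dilog_landen hs
    refine ((((hz.Li_hasDerivAt 2).add (hz.Li_one_sub_hasDerivAt 2)).add
      (hz.Li_one_sub_inv_hasDerivAt 2)).sub
      (((hz.log_hasDerivAt.const_mul ((Real.pi : ℂ) ^ 2 / 6)).add
        ((hz.log_hasDerivAt.pow 3).div_const 6)).sub
        ((hz.log_hasDerivAt.mul
          (hz.log_hasDerivAt.mul hz.log_one_sub_hasDerivAt)).div_const 2))).congr_deriv ?_
    simp only [Pi.mul_apply]
    rw [← e1, eq_sub_of_add_eq (eq_neg_of_add_eq_zero_left e2)]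
    field_simp
    push_cast
    ring
  refine eq_of_seg (F := fun z => Li 3 z + Li 3 (1 - z) + Li 3 (1 - z⁻¹)
      - ((Real.pi : ℂ) ^ 2 / 6 * log z + log z ^ 3 / 6
        - log z * (log z * log (1 - z)) / 2)) hd ?_ ht
  have h := (((tendsto_Li_seg 3 (by norm_num)).add (tendsto_Li_one_sub_seg 3 (by norm_num))).add
      (tendsto_Li_one_sub_inv_seg 3 (by norm_num))).sub
      (((tendsto_log_seg.const_mul ((Real.pi : ℂ) ^ 2 / 6)).add
        ((tendsto_log_seg.pow 3).div_const 6)).sub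
        ((tendsto_log_seg.mul tendsto_log_mul_log).div_const 2))
  simpa [Li_three_one] using h

/-! ### Evaluation at `(1 + i) / 2` -/

lemma one_sub_seg_one : 1 - seg 1 = (starRingEnd ℂ) (seg 1) := by
  apply Complex.ext
  · rw [sub_re, conj_re, seg_re]; norm_num
  · rw [sub_im, conj_im, seg_im]; norm_num

lemma one_sub_inv_seg_one : 1 - (seg 1)⁻¹ = I := by
  have h0 : seg 1 ≠ 0 := seg_ne_zero le_rfl
  field_simp
  rw [seg_one]
  linear_combination (-1 / 2 : ℂ) * I_sq

/-- The limit of `trilog_landen` at the endpoint `(1 + i) / 2`. -/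
lemma trilog_landen_one :
    Li 3 (seg 1) + Li 3 (1 - seg 1) + Li 3 (1 - (seg 1)⁻¹)
      - ((Real.pi : ℂ) ^ 2 / 6 * log (seg 1) + log (seg 1) ^ 3 / 6
        - log (seg 1) * (log (seg 1) * log (1 - seg 1)) / 2) = zeta3 := by
  have hz : Tendsto seg (𝓝[<] 1) (𝓝 (seg 1)) :=
    (seg_continuous.tendsto 1).mono_left nhdsWithin_le_nhds
  have hs : seg 1 ∈ slitPlane := Or.inl (by rw [seg_re]; norm_num)
  have hs' : 1 - seg 1 ∈ slitPlane := Or.inl (by rw [sub_re, seg_re]; norm_num)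
  have hl := hz.clog hs
  have hl' := (hz.const_sub 1).clog hs'
  have n1 : ‖seg 1‖ ≤ 1 := (norm_lt_of_normSq (by rw [seg_normSq]; norm_num)).le
  have n2 : ‖1 - seg 1‖ ≤ 1 := (norm_lt_of_normSq (by rw [one_sub_seg_normSq]; norm_num)).le
  have n3 : ‖1 - (seg 1)⁻¹‖ ≤ 1 := by rw [one_sub_inv_seg_one]; simp
  have h1 := tendsto_Li 3 (by norm_num) hz n1 (eventually_good_one.mono fun t h => h.norm_lt)
  have h2 := tendsto_Li 3 (by norm_num) (hz.const_sub 1) n2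
    (eventually_good_one.mono fun t h => h.norm_one_sub_lt)
  have h3 := tendsto_Li 3 (by norm_num) ((hz.inv₀ (seg_ne_zero le_rfl)).const_sub 1) n3
    (eventually_good_one.mono fun t h => h.norm_one_sub_inv_lt)
  have h := ((h1.add h2).add h3).sub
      (((hl.const_mul ((Real.pi : ℂ) ^ 2 / 6)).add ((hl.pow 3).div_const 6)).sub
        ((hl.mul (hl.mul hl')).div_const 2))
  refine tendsto_nhds_unique h (tendsto_const_nhds.congr' ?_)
  filter_upwards [Ioo_mem_nhdsLT (zero_lt_one (α := ℝ))] with t ht using (trilog_landen ht).symm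

lemma log_seg_one : log (seg 1) = ((-(Real.log 2 / 2) : ℝ) : ℂ) + ((Real.pi / 4 : ℝ) : ℂ) * I := by
  have hexp : Complex.exp (((-(Real.log 2 / 2) : ℝ) : ℂ) + ((Real.pi / 4 : ℝ) : ℂ) * I) = seg 1 := by
    have hr : Real.exp (-(Real.log 2 / 2)) = (√2)⁻¹ := by
      rw [Real.exp_neg, ← Real.log_sqrt (by norm_num), Real.exp_log (by positivity)]
    have h2 : (√2)⁻¹ * (√2 / 2) = 1 / 2 := by field_simp
    rw [Complex.exp_add, Complex.exp_mul_I, ← Complex.ofReal_exp, ← Complex.ofReal_cos,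
      ← Complex.ofReal_sin, Real.cos_pi_div_four, Real.sin_pi_div_four, hr]
    apply Complex.ext
    · rw [seg_re, re_ofReal_mul]; simp only [add_re, ofReal_re, re_ofReal_mul, I_re]; linarith
    · rw [seg_im, im_ofReal_mul]; simp only [add_im, ofReal_im, im_ofReal_mul, I_im]; linarith
  have hp := Real.pi_pos
  rw [← hexp, Complex.log_exp] <;>
    simp only [add_im, ofReal_im, im_ofReal_mul, I_im] <;> linarith

theorem trilog_ladder_B :
    (Li 3 ((1 + I) / 2)).re =
      (35 / 64) * zeta3 + Real.log 2 ^ 3 / 48 - 5 * Real.pi ^ 2 * Real.log 2 / 192 := by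
  have h := trilog_landen_one
  have hs : seg 1 ∈ slitPlane := Or.inl (by rw [seg_re]; norm_num)
  have hl : log (1 - seg 1)
      = ((-(Real.log 2 / 2) : ℝ) : ℂ) - ((Real.pi / 4 : ℝ) : ℂ) * I := by
    rw [one_sub_seg_one, Complex.log_conj _ (slitPlane_arg_ne_pi hs), log_seg_one]
    simp only [map_add, map_mul, conj_ofReal, conj_I]
    ring
  rw [hl, one_sub_seg_one, one_sub_inv_seg_one, Li_conj, log_seg_one] at h
  set a := -(Real.log 2 / 2) with ha
  set b := Real.pi / 4 with hb
  -- Separate the elementary part into real and imaginary parts.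
  have e : (Real.pi : ℂ) ^ 2 / 6 * (a + b * I) + (a + b * I) ^ 3 / 6
      - (a + b * I) * ((a + b * I) * (a - b * I)) / 2
      = ((Real.pi ^ 2 / 6 * a + (a ^ 3 - 3 * a * b ^ 2) / 6 - a * (a ^ 2 + b ^ 2) / 2 : ℝ) : ℂ)
        + ((Real.pi ^ 2 / 6 * b + (3 * a ^ 2 * b - b ^ 3) / 6 - b * (a ^ 2 + b ^ 2) / 2 : ℝ) : ℂ)
          * I := by
    push_cast
    ring_nf
    simp only [I_sq, I_pow_three]
    ring
  rw [e] at h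
  have hre := congrArg Complex.re h
  simp only [add_re, sub_re, conj_re, ofReal_re, re_ofReal_mul, I_re, Li_three_I_re] at hre
  rw [← seg_one]
  rw [ha, hb] at hre
  linear_combination hre / 2
end
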